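/- Strong completeness of EL: for every formula φ and every set Φ of formulas of the language EL, if Φ semantically entails φ over similarity models (every pointed similarity model satisfying all formulas of Φ satisfies φ), then Φ ⊢_EL φ (i.e., there is a finite subset {ψ_1,…,ψ_n} ⊆ Φ such that (ψ_1 ∧ … ∧ ψ_n) → φ is a theorem of EL). -/

import Mathlib

/-- Formulas of the language EL over a set `Ag` of agents, with
propositional variables drawn from the countably infinite set `ℕ`.  Groups
are nonempty finite sets of agents. -/
inductive Formula (Ag : Type) : Type
  | atom : ℕ → Formula Ag
  | neg  : Formula Ag → Formula Ag
  | impl : Formula Ag → Formula Ag → Formula Ag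
  | K    : Ag → Formula Ag → Formula Ag

/-- A similarity model `(W, A, E, C, ν)`. -/
structure SimModel (Ag : Type) where
  W : Type
  A : Type
  w_nonempty : Nonempty W
  E : W → W → Set A
  Cap : Ag → Set A
  val : W → Set ℕ
  positivity : ∀ s t : W, E s t = Set.univ → s = t
  symmetry : ∀ s t : W, E s t = E t s

/-- Satisfaction on similarity models. -/
def SimModel.sat {Ag : Type} (M : SimModel Ag) : M.W → Formula Ag → Prop
  | s, .atom p => p ∈ M.val s
  | s, .neg φ => ¬ M.sat s φ
  | s, .impl φ ψ => M.sat s φ → M.sat s ψ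
  | s, .K a φ => ∀ t, M.Cap a ⊆ M.E s t → M.sat t φ

namespace Formula
/-- Conjunction, defined from the primitive connectives. -/
def and {Ag : Type} (φ ψ : Formula Ag) : Formula Ag := .neg (φ.impl ψ.neg)
/-- A fixed tautology. -/
def top {Ag : Type} : Formula Ag := (atom 0).impl (atom 0)
/-- Biconditional, defined from the primitive connectives. -/
def iff {Ag : Type} (φ ψ : Formula Ag) : Formula Ag := (φ.impl ψ).and (ψ.impl φ)
end Formula

/-- `φ` is a propositional tautology: it evaluates to `true` under every
assignment of truth values to formulas that respects negation and implication
(thereby treating atoms and modal formulas as propositional atoms). -/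
def IsTautology {Ag : Type} (φ : Formula Ag) : Prop :=
  ∀ v : Formula Ag → Bool,
    (∀ ψ : Formula Ag, v ψ.neg = !v ψ) →
    (∀ ψ χ : Formula Ag, v (ψ.impl χ) = (!v ψ || v χ)) →
    v φ = true

/-- The axiomatic system EL: the least set of formulas containing all propositional tautologies, closed under modus ponens and necessitation for each `K_a`, and containing the axiom schemes K and B. -/
inductive Prov {Ag : Type} : Formula Ag → Prop
  | taut {φ : Formula Ag} : IsTautology φ → Prov φ
  | mp {φ ψ : Formula Ag} : Prov (φ.impl ψ) → Prov φ → Prov ψ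
  | nec {φ : Formula Ag} (a : Ag) : Prov φ → Prov (.K a φ)
  | kK {φ ψ : Formula Ag} (a : Ag) :
      Prov ((Formula.K a (φ.impl ψ)).impl ((Formula.K a φ).impl (.K a ψ)))
  | axB {φ : Formula Ag} (a : Ag) :
      Prov (φ.impl (.K a (Formula.neg (.K a φ.neg))))

inductive Der {Ag : Type} (Γ : Set (Formula Ag)) : Formula Ag → Prop
  | hyp {φ : Formula Ag} : φ ∈ Γ → Der Γ φ
  | prov {φ : Formula Ag} : Prov φ → Der Γ φ
  | mp {φ ψ : Formula Ag} : Der Γ (φ.impl ψ) → Der Γ φ → Der Γ ψ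

namespace Der
variable {Ag : Type}

theorem taut {Γ : Set (Formula Ag)} {φ : Formula Ag} (h : IsTautology φ) : Der Γ φ :=
  .prov (.taut h)

theorem deduction {Γ : Set (Formula Ag)} {χ φ : Formula Ag} (h : Der (insert χ Γ) φ) :
    Der Γ (χ.impl φ) := by
  induction h with
  | @hyp φ h =>
    rcases h with rfl | h
    · exact taut (fun v hn hi => by simp [hi])
    · exact .mp (φ := φ) (taut (fun v hn hi => by simp only [hi]; grind)) (.hyp h)
  | @prov φ h =>
    exact .mp (φ := φ) (taut (fun v hn hi => by simp only [hi]; grind)) (.prov h)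
  | @mp φ ψ _ _ ih1 ih2 =>
    exact .mp (.mp (taut (fun v hn hi => by simp only [hi]; grind)) ih1) ih2

theorem chain {c : Set (Set (Formula Ag))} (hc : IsChain (· ⊆ ·) c) (hne : c.Nonempty)
    {φ : Formula Ag} (h : Der (⋃₀ c) φ) : ∃ s ∈ c, Der s φ := by
  have mono : ∀ {s t : Set (Formula Ag)} {ψ}, s ⊆ t → Der s ψ → Der t ψ := by
    intro s t ψ hst h
    induction h with
    | hyp h => exact .hyp (hst h)
    | prov h => exact .prov h
    | mp _ _ ih1 ih2 => exact .mp ih1 ih2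
  induction h with
  | hyp h =>
    obtain ⟨s, hs, h⟩ := h
    exact ⟨s, hs, .hyp h⟩
  | prov h =>
    obtain ⟨s, hs⟩ := hne
    exact ⟨s, hs, .prov h⟩
  | mp _ _ ih1 ih2 =>
    obtain ⟨s, hs, h1⟩ := ih1
    obtain ⟨t, ht, h2⟩ := ih2
    rcases hc.total hs ht with hst | hst
    · exact ⟨t, ht, .mp (mono hst h1) h2⟩
    · exact ⟨s, hs, .mp h1 (mono hst h2)⟩

theorem val_conj (v : Formula Ag → Bool) (hn : ∀ ψ : Formula Ag, v ψ.neg = !v ψ)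
    (hi : ∀ ψ χ : Formula Ag, v (ψ.impl χ) = (!v ψ || v χ)) (L : List (Formula Ag)) :
    v (L.foldr Formula.and Formula.top) = L.all v := by
  induction L with
  | nil => simp [Formula.top, hi]
  | cons a L ih => simp [Formula.and, hi, hn, ih]

theorem toList {Γ : Set (Formula Ag)} {φ : Formula Ag} (h : Der Γ φ) :
    ∃ L : List (Formula Ag), (∀ ψ ∈ L, ψ ∈ Γ) ∧
      Prov ((L.foldr Formula.and Formula.top).impl φ) := by
  induction h with
  | @hyp φ h =>
    refine ⟨[φ], by simpa using h, .taut fun v hn hi => ?_⟩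
    rw [hi, val_conj v hn hi]; simp
  | @prov φ h =>
    refine ⟨[], by simp, .mp (φ := φ) (.taut fun v hn hi => ?_) h⟩
    simp only [hi]; grind
  | @mp φ ψ _ _ ih1 ih2 =>
    obtain ⟨L1, h1, p1⟩ := ih1
    obtain ⟨L2, h2, p2⟩ := ih2
    refine ⟨L1 ++ L2, ?_, .mp (.mp (.taut fun v hn hi => ?_) p1) p2⟩
    · intro χ hχ
      rcases List.mem_append.1 hχ with h | h
      · exact h1 _ h
      · exact h2 _ h
    · simp only [hi, val_conj v hn hi, List.all_append]
      cases L1.all v <;> cases L2.all v <;> cases v φ <;> cases v ψ <;> rfl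

end Der

def IsWorld {Ag : Type} (Γ : Set (Formula Ag)) : Prop :=
  (∀ φ, Der Γ φ → φ ∈ Γ) ∧ ∀ φ : Formula Ag, φ.neg ∈ Γ ↔ φ ∉ Γ

theorem lindenbaum {Ag : Type} {Γ : Set (Formula Ag)} {φ : Formula Ag} (h : ¬ Der Γ φ) :
    ∃ Δ, Γ ⊆ Δ ∧ IsWorld Δ ∧ φ ∉ Δ := by
  obtain ⟨Δ, hΓ, hm⟩ := zorn_subset_nonempty {Δ : Set (Formula Ag) | ¬ Der Δ φ}
    (fun c hc hch hne => ⟨⋃₀ c, fun hd => by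
      obtain ⟨s, hs, h⟩ := Der.chain hch hne hd
      exact hc hs h, fun s hs => Set.subset_sUnion_of_mem hs⟩) Γ h
  have hnd : ¬ Der Δ φ := hm.prop
  have key : ∀ ψ, ψ ∉ Δ → Der Δ (ψ.impl φ) := by
    intro ψ hψ
    apply Der.deduction
    by_contra hc
    exact hψ (hm.le_of_ge (y := insert ψ Δ) hc (Set.subset_insert _ _) (Set.mem_insert _ _))
  refine ⟨Δ, hΓ, ⟨?_, ?_⟩, fun hφ => hnd (.hyp hφ)⟩
  · intro ψ hψ
    by_contra hc
    exact hnd (.mp (key ψ hc) hψ)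
  · intro ψ
    constructor
    · intro h1 h2
      refine hnd (.mp (.mp (.taut fun v hn hi => ?_) (.hyp h1)) (.hyp h2))
      simp only [hi, hn]; grind
    · intro h1
      by_contra h2
      refine hnd (.mp (.mp (.taut fun v hn hi => ?_) (key _ h1)) (key _ h2))
      simp only [hi, hn]; grind

theorem der_K {Ag : Type} {Γ : Set (Formula Ag)} (hΓ : IsWorld Γ) (a : Ag) {ψ : Formula Ag}
    (h : Der {χ | Formula.K a χ ∈ Γ} ψ) : Formula.K a ψ ∈ Γ := by
  induction h with
  | hyp h => exact h
  | prov h => exact hΓ.1 _ (.prov (.nec a h))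
  | mp _ _ ih1 ih2 => exact hΓ.1 _ (.mp (.mp (.prov (.kK a)) (.hyp ih1)) (.hyp ih2))

def canR {Ag : Type} (a : Ag) (s t : Set (Formula Ag)) : Prop :=
  ∀ ψ, Formula.K a ψ ∈ s → ψ ∈ t

theorem canR_symm {Ag : Type} {a : Ag} {s t : Set (Formula Ag)} (hs : IsWorld s)
    (ht : IsWorld t) (h : canR a s t) : canR a t s := by
  intro ψ hψ
  by_contra hc
  have h1 := (hs.2 ψ).2 hc
  have h2 := h _ (hs.1 _ (.mp (.prov (.axB a)) (.hyp h1)))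
  refine (ht.2 _).1 h2 (der_K ht a (.mp (φ := ψ) (.taut fun v hn hi => ?_) (.hyp hψ)))
  simp only [hi, hn]; grind

def canModel (Ag : Type) (hne : Nonempty {s : Set (Formula Ag) // IsWorld s}) : SimModel Ag where
  W := {s : Set (Formula Ag) // IsWorld s}
  A := Option Ag
  w_nonempty := hne
  E s t := {x | ∃ a, x = some a ∧ canR a s.1 t.1}
  Cap a := {some a}
  val s := {p | Formula.atom p ∈ s.1}
  positivity s t h := by
    have : (none : Option Ag) ∈ (Set.univ : Set (Option Ag)) := trivial
    rw [← h] at this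
    obtain ⟨a, ha, _⟩ := this
    cases ha
  symmetry s t := by
    ext x
    constructor
    · rintro ⟨a, ha, h⟩
      exact ⟨a, ha, canR_symm s.2 t.2 h⟩
    · rintro ⟨a, ha, h⟩
      exact ⟨a, ha, canR_symm t.2 s.2 h⟩

theorem truth {Ag : Type} (hne : Nonempty {s : Set (Formula Ag) // IsWorld s}) (φ : Formula Ag) :
    ∀ s : {s : Set (Formula Ag) // IsWorld s}, (canModel Ag hne).sat s φ ↔ φ ∈ s.1 := by
  induction φ with
  | atom p => intro s; exact Iff.rfl
  | neg φ ih =>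
    intro s
    exact (not_congr (ih s)).trans (s.2.2 φ).symm
  | impl φ ψ ih1 ih2 =>
    intro s
    refine (imp_congr (ih1 s) (ih2 s)).trans ⟨fun h => ?_, fun h h1 => s.2.1 _ (.mp (.hyp h) (.hyp h1))⟩
    by_cases h1 : φ ∈ s.1
    · refine s.2.1 _ (.mp (φ := ψ) (.taut fun v hn hi => ?_) (.hyp (h h1)))
      simp only [hi]; grind
    · refine s.2.1 _ (.mp (.taut fun v hn hi => ?_) (.hyp ((s.2.2 _).2 h1)))
      simp only [hi, hn]; grind
  | K a φ ih =>
    intro s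
    constructor
    · intro h
      by_contra hc
      obtain ⟨t, hst, ht, hφ⟩ := lindenbaum (fun hd => hc (der_K s.2 a hd))
      refine hφ ((ih ⟨t, ht⟩).1 (h ⟨t, ht⟩ ?_))
      rintro _ rfl
      exact ⟨a, rfl, fun ψ hψ => hst hψ⟩
    · intro h t hst
      obtain ⟨b, hb, hr⟩ := hst (show some a ∈ ({some a} : Set (Option Ag)) from rfl)
      cases hb
      exact (ih t).2 (hr _ h)

/-- strong completeness of EL: if `Φ` semantically entails
`φ` over similarity models, then some finite conjunction `ψ₁ ∧ … ∧ ψₙ` of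
members of `Φ` is such that `(ψ₁ ∧ … ∧ ψₙ) → φ` is a theorem of EL. -/
theorem stmt_15 {Ag : Type} [Fintype Ag] [Nonempty Ag]
    (Φ : Set (Formula Ag)) (φ : Formula Ag)
    (h : ∀ (M : SimModel Ag) (s : M.W), (∀ ψ ∈ Φ, M.sat s ψ) → M.sat s φ) :
    ∃ L : List (Formula Ag), (∀ ψ ∈ L, ψ ∈ Φ) ∧
      Prov ((L.foldr Formula.and Formula.top).impl φ) := by
  apply Der.toList
  by_contra hd
  obtain ⟨s, hΦ, hs, hφ⟩ := lindenbaum hd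
  have hne : Nonempty {s : Set (Formula Ag) // IsWorld s} := ⟨⟨s, hs⟩⟩
  exact hφ ((truth hne φ ⟨s, hs⟩).1
    (h (canModel Ag hne) ⟨s, hs⟩ fun ψ hψ => (truth hne ψ ⟨s, hs⟩).2 (hΦ hψ)))
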